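/- arXiv:2106.11552 — 4 statements merged into one kernel-verified Lean document; each statement's English description precedes it below -/
import Mathlib

section
/- Let m ≥ 1 and let H be a subgroup of the free group F_m. The language L_H of reduced words over Σ representing elements of H is a regular language (accepted by some deterministic finite automaton with finitely many states) if and only if H is finitely generated. -/
/-- The language of reduced words over `Σ = A ∪ A⁻¹` (letters encoded as `Fin m × Bool`)
that represent elements of the subgroup `H` of the free group `F_m`. -/
def LH (m : ℕ) (H : Subgroup (FreeGroup (Fin m))) : Language (Fin m × Bool) :=
  {w | FreeGroup.reduce w = w ∧ FreeGroup.mk w ∈ H}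

open FreeGroup

/-- A subgroup of a free group of finite rank is finitely generated if its elements are exactly
those represented by the words of some language with finitely many left quotients. -/
theorem FreeGroup.fg_of_finite_range_leftQuotient {α : Type*} [Finite α]
    {H : Subgroup (FreeGroup α)} {L : Language (α × Bool)}
    (hfin : (Set.range L.leftQuotient).Finite) (hL : ∀ w ∈ L, FreeGroup.mk w ∈ H)
    (hH : ∀ h ∈ H, ∃ w ∈ L, FreeGroup.mk w = h) : H.FG := by
  let rep : Set.range L.leftQuotient → List (α × Bool) := fun Q => Q.2.choose
  have hrep : ∀ Q, L.leftQuotient (rep Q) = Q := fun Q => Q.2.choose_spec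
  let state : List (α × Bool) → Set.range L.leftQuotient := fun w => ⟨L.leftQuotient w, w, rfl⟩
  have mem_rep : ∀ w y, rep (state w) ++ y ∈ L ↔ w ++ y ∈ L := fun w y => by
    rw [← Language.mem_leftQuotient, hrep, Language.mem_leftQuotient]
  have := hfin.to_subtype
  let T : Set (FreeGroup α) := Set.range (fun Q => mk (rep Q)) ∪
    Set.range (fun t : Set.range L.leftQuotient × (α × Bool) × Set.range L.leftQuotient =>
      mk (rep t.1 ++ [t.2.1]) * (mk (rep t.2.2))⁻¹)
  have hT : T.Finite := (Set.finite_range _).union (Set.finite_range _)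
  have key : ∀ w : List (α × Bool), (∃ y, w ++ y ∈ L) →
      mk w * (mk (rep (state w)))⁻¹ ∈ Subgroup.closure (T ∩ H) := by
    intro w
    induction w using List.reverseRecOn with
    | nil =>
      rintro ⟨y, hy⟩
      have h1 := hL _ hy
      have h2 := hL _ ((mem_rep _ _).2 hy)
      rw [← mul_mk] at h2
      rw [← one_eq_mk, one_mul, inv_mem_iff]
      exact Subgroup.subset_closure
        ⟨.inl ⟨_, rfl⟩, (Subgroup.mul_mem_cancel_right H (by simpa using h1)).1 h2⟩
    | append_singleton w a ih =>
      rintro ⟨y, hy⟩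
      have hy' : w ++ ([a] ++ y) ∈ L := by simpa using hy
      have h1 := hL _ ((mem_rep _ _).2 hy')
      have h2 := hL _ ((mem_rep _ _).2 hy)
      rw [← List.append_assoc, ← mul_mk] at h1
      rw [← mul_mk] at h2
      have h3 : mk (rep (state w) ++ [a]) * (mk (rep (state (w ++ [a]))))⁻¹ ∈ H := by
        simpa only [mul_inv_rev, mul_assoc, mul_inv_cancel_left] using
          H.mul_mem h1 (H.inv_mem h2)
      have h4 := Subgroup.mul_mem _ (ih ⟨_, hy'⟩) (Subgroup.subset_closure
        (show _ ∈ T ∩ H from ⟨.inr ⟨(state w, a, state (w ++ [a])), rfl⟩, h3⟩))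
      simpa only [← mul_mk, mul_assoc, inv_mul_cancel_left] using h4
  refine (Subgroup.fg_iff H).2 ⟨T ∩ H, le_antisymm ?_ ?_, hT.subset Set.inter_subset_left⟩
  · exact (Subgroup.closure_le H).2 Set.inter_subset_right
  · intro h hh
    obtain ⟨w, hw, rfl⟩ := hH h hh
    have hr : rep (state w) ∈ L := by simpa using (mem_rep w []).2 (by simpa using hw)
    simpa only [inv_mul_cancel_right] using Subgroup.mul_mem _ (key w ⟨[], by simpa using hw⟩)
      (Subgroup.subset_closure (show _ ∈ T ∩ H from ⟨.inl ⟨state w, rfl⟩, hL _ hr⟩))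

namespace FreeGroup

variable {α : Type*}

/-- The vertex of the Schreier graph of `H` reached from the base point by reading `w`; the right
coset `H w` is encoded as the left coset `w⁻¹ H`. -/
def schreierVertex (H : Subgroup (FreeGroup α)) (w : List (α × Bool)) : FreeGroup α ⧸ H :=
  (((mk w)⁻¹ : FreeGroup α) : FreeGroup α ⧸ H)

/-- The path labelled `w` from the base point of the Schreier graph of `H` stays within `P`. -/
def PathIn (H : Subgroup (FreeGroup α)) (P : Set (FreeGroup α ⧸ H)) (w : List (α × Bool)) : Prop :=
  ∀ p, p <+: w → schreierVertex H p ∈ P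

theorem _root_.List.prefix_append_iff {β : Type*} {p l₁ l₂ : List β} :
    p <+: l₁ ++ l₂ ↔ p <+: l₁ ∨ ∃ q, p = l₁ ++ q ∧ q <+: l₂ := by
  constructor
  · intro h
    rcases List.prefix_or_prefix_of_prefix h (List.prefix_append l₁ l₂) with h' | ⟨q, rfl⟩
    · exact .inl h'
    · exact .inr ⟨q, rfl, (List.prefix_append_right_inj l₁).1 h⟩
  · rintro (h | ⟨q, rfl, h⟩)
    · exact h.trans (List.prefix_append _ _)
    · exact (List.prefix_append_right_inj l₁).2 h

variable {H : Subgroup (FreeGroup α)} {P : Set (FreeGroup α ⧸ H)} {v w : List (α × Bool)}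

theorem schreierVertex_append_of_mem (hv : mk v ∈ H) :
    schreierVertex H (v ++ w) = schreierVertex H w := by
  rw [schreierVertex, schreierVertex, QuotientGroup.eq]
  rw [inv_inv, ← mul_mk, mul_inv_cancel_right]
  exact hv

theorem PathIn.step (hv : PathIn H P v) (h : Red.Step v w) : PathIn H P w := by
  obtain @⟨L₁, L₂, x, b⟩ := h
  intro p hp
  rcases List.prefix_append_iff.1 hp with hp | ⟨q, rfl, hq⟩
  · exact hv p (hp.trans (List.prefix_append _ _))
  · have := hv (L₁ ++ (x, b) :: (x, !b) :: q) (by simpa using hq)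
    rwa [schreierVertex, show mk (L₁ ++ (x, b) :: (x, !b) :: q) = mk (L₁ ++ q) from
      Quot.sound Red.Step.not] at this

theorem PathIn.red (hv : PathIn H P v) (h : Red v w) : PathIn H P w := by
  induction h with
  | refl => exact hv
  | tail _ h ih => exact ih.step h

theorem PathIn.append (hv : PathIn H P v) (hvH : mk v ∈ H) (hw : PathIn H P w) :
    PathIn H P (v ++ w) := by
  intro p hp
  rcases List.prefix_append_iff.1 hp with hp | ⟨q, rfl, hq⟩
  · exact hv p hp
  · rw [schreierVertex_append_of_mem hvH]
    exact hw q hq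

theorem PathIn.invRev (hv : PathIn H P v) (hvH : mk v ∈ H) : PathIn H P (invRev v) := by
  rintro p ⟨q, hq⟩
  have hv' : v = FreeGroup.invRev q ++ FreeGroup.invRev p := by
    rw [← invRev_append, hq, invRev_invRev]
  have h := hv (FreeGroup.invRev q) (hv' ▸ List.prefix_append _ _)
  rw [← schreierVertex_append_of_mem hvH (w := p)]
  convert h using 1
  rw [schreierVertex, schreierVertex, hv', ← mul_mk, ← mul_mk, ← inv_mk (L := p),
    inv_mul_cancel_right]

/-- The reduced words of a finitely generated subgroup only visit finitely many vertices of its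
Schreier graph. -/
theorem exists_finite_pathIn [DecidableEq α] (hH : H.FG) :
    ∃ P : Set (FreeGroup α ⧸ H), P.Finite ∧ ∀ h ∈ H, PathIn H P h.toWord := by
  obtain ⟨S, hS, hfin⟩ := (Subgroup.fg_iff H).1 hH
  have hSH : ∀ {h}, h ∈ Subgroup.closure S → mk h.toWord ∈ H := fun h => by
    rwa [mk_toWord, ← hS]
  refine ⟨insert (schreierVertex H []) (⋃ s ∈ S, schreierVertex H '' {p | p <+: s.toWord}),
    ((hfin.biUnion fun s _ => Set.Finite.image _ ?_)).insert _, fun h hh => ?_⟩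
  · exact (List.finite_toSet s.toWord.inits).subset fun p hp => List.mem_inits _ _ |>.2 hp
  rw [← hS] at hh
  induction hh using Subgroup.closure_induction with
  | mem s hs =>
    exact fun p hp => .inr (Set.mem_biUnion hs ⟨p, hp, rfl⟩)
  | one =>
    intro p hp
    rw [toWord_one, List.prefix_nil] at hp
    exact .inl (hp ▸ rfl)
  | mul g h hg _ ihg ihh =>
    rw [toWord_mul]
    exact (ihg.append (hSH hg) ihh).red reduce.red
  | inv g hg ih =>
    rw [toWord_inv]
    exact ih.invRev (hSH hg)

end FreeGroup

/-- The language of reduced words of a finitely generated subgroup has finitely many left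
quotients: each is empty, or determined by a Schreier graph vertex and the last letter read. -/
theorem finite_range_leftQuotient_LH {m : ℕ} {H : Subgroup (FreeGroup (Fin m))} (hH : H.FG) :
    (Set.range (LH m H).leftQuotient).Finite := by
  obtain ⟨P, hP, hpath⟩ := exists_finite_pathIn hH
  let f : (FreeGroup (Fin m) ⧸ H) × Option (Fin m × Bool) → Language (Fin m × Bool) := fun t =>
    {y | (IsReduced y ∧ ∀ a ∈ t.2, ∀ b ∈ y.head?, a.1 = b.1 → a.2 = b.2) ∧
      t.1 = (mk y : FreeGroup (Fin m) ⧸ H)}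
  refine (((hP.prod Set.finite_univ).image f).insert 0).subset ?_
  rintro _ ⟨w, rfl⟩
  by_cases hne : ∃ y, w ++ y ∈ LH m H
  · obtain ⟨y, hred, hy⟩ := hne
    have hwy := hpath _ hy
    rw [toWord_mk, hred] at hwy
    refine .inr ⟨(schreierVertex H w, w.getLast?), ⟨hwy w (List.prefix_append _ _), trivial⟩, ?_⟩
    have hw : IsReduced w :=
      (isReduced_iff_reduce_eq.2 hred).infix (List.prefix_append _ _).isInfix
    ext z
    change (_ ∧ ((((mk w)⁻¹ : FreeGroup (Fin m)) : FreeGroup (Fin m) ⧸ H) = _)) ↔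
      reduce (w ++ z) = w ++ z ∧ mk (w ++ z) ∈ H
    rw [← isReduced_iff_reduce_eq, QuotientGroup.eq, inv_inv, mul_mk, FreeGroup.IsReduced,
      FreeGroup.IsReduced, List.isChain_append]
    exact and_congr_left fun _ => (and_iff_right hw).symm
  · exact .inl (Set.eq_empty_of_forall_notMem fun y hy => hne ⟨y, hy⟩)

/-- The language `L_H` of reduced words representing elements of `H ≤ F_m` is regular
(accepted by some DFA with finitely many states) if and only if `H` is finitely
generated. -/
theorem regular_iff_fg (m : ℕ) (hm : 1 ≤ m) (H : Subgroup (FreeGroup (Fin m))) :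
    (∃ (σ : Type) (_ : Fintype σ) (M : DFA (Fin m × Bool) σ), M.accepts = LH m H) ↔ H.FG := by
  refine ⟨fun h => ?_, fun h =>
    Language.IsRegular.of_finite_range_leftQuotient (finite_range_leftQuotient_LH h)⟩
  exact FreeGroup.fg_of_finite_range_leftQuotient
    (Language.IsRegular.finite_range_leftQuotient h) (fun w hw => hw.2)
    fun h hh => ⟨h.toWord, ⟨reduce_toWord h, by rwa [mk_toWord]⟩, mk_toWord⟩
end

section
/- Let M be a nondeterministic finite automaton over a finite alphabet with finite state set. Suppose M is essential and has bounded ambiguity. Then the entropy of the language accepted by M equals the entropy of the walk language W(M) of its transition graph: h(L(M)) = h(W(M)). -/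
/-- An accepting run of the word `w` in the NFA `M`: a sequence of `w.length + 1`
states starting in an initial state, ending in a final state, and following the
transition relation. -/
def AccRun {α σ : Type*} (M : NFA α σ) (w : List α) (r : Fin (w.length + 1) → σ) : Prop :=
  r 0 ∈ M.start ∧ r (Fin.last w.length) ∈ M.accept ∧
    ∀ i : Fin w.length, r i.succ ∈ M.step (r i.castSucc) (w.get i)

/-- The language accepted by the NFA `M`: words admitting at least one accepting run. -/
def NLang {α σ : Type*} (M : NFA α σ) : Set (List α) :=
  {w | ∃ r, AccRun M w r}

/-- `M` is essential: every state occurs in some accepting run. -/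
def Essential {α σ : Type*} (M : NFA α σ) : Prop :=
  ∀ q : σ, ∃ (w : List α) (r : Fin (w.length + 1) → σ), AccRun M w r ∧ ∃ i, r i = q

/-- `M` has bounded ambiguity: some constant `K` bounds the number of accepting runs
of every word. -/
def BoundedAmbiguity {α σ : Type*} (M : NFA α σ) : Prop :=
  ∃ K : ℕ, ∀ w : List α, Nat.card {r : Fin (w.length + 1) → σ // AccRun M w r} ≤ K

/-- The edge set of the NFA `M`: triples `(p, x, q)` with `q ∈ δ(p, x)`. -/
def Edge {α σ : Type*} (M : NFA α σ) : Type _ :=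
  {e : σ × α × σ // e.2.2 ∈ M.step e.1 e.2.1}

/-- The walk language of `M` over the alphabet of edges: sequences of edges in which
the target of each edge equals the source of the next. -/
def WLang {α σ : Type*} (M : NFA α σ) : Set (List (Edge M)) :=
  {l | l.Chain' fun e f => e.1.2.2 = f.1.1}

/-- The entropy of a language `L`: `limsup (log |B_n(L)|) / n`, where `B_n(L)` is the
set of words of length `n` in `L`. -/
noncomputable def entropy {α : Type*} (L : Set (List α)) : ℝ :=
  Filter.limsup
    (fun n : ℕ => Real.log (Nat.card {w : List α // w ∈ L ∧ w.length = n}) / n)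
    Filter.atTop

open Filter Topology

/-- `WalkFromTo M p l q`: the edge sequence `l` is a walk from the state `p` to the state `q`. -/
def WalkFromTo {α σ : Type*} (M : NFA α σ) : σ → List (Edge M) → σ → Prop
  | p, [], q => p = q
  | p, e :: l, q => e.1.1 = p ∧ WalkFromTo M e.1.2.2 l q

/-- The walks of `M` from an initial state to a final state. -/
def AcceptedWalks {α σ : Type*} (M : NFA α σ) : Set (List (Edge M)) :=
  {l | ∃ p ∈ M.start, ∃ q ∈ M.accept, WalkFromTo M p l q}

/-- The word read along a sequence of edges. -/
def edgeWord {α σ : Type*} {M : NFA α σ} (l : List (Edge M)) : List α :=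
  l.map fun e => e.1.2.1

/-- The states visited by a sequence of edges starting in `p`. -/
def edgeStates {α σ : Type*} {M : NFA α σ} (p : σ) (l : List (Edge M)) : List σ :=
  p :: l.map fun e => e.1.2.2

section Walks

variable {α σ : Type*} {M : NFA α σ}

@[simp]
theorem length_edgeWord (l : List (Edge M)) : (edgeWord l).length = l.length := by
  simp [edgeWord]

@[simp]
theorem length_edgeStates (p : σ) (l : List (Edge M)) :
    (edgeStates p l).length = l.length + 1 := by
  simp [edgeStates]

theorem WalkFromTo.append {p q s : σ} {l₁ l₂ : List (Edge M)} (h₁ : WalkFromTo M p l₁ q)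
    (h₂ : WalkFromTo M q l₂ s) : WalkFromTo M p (l₁ ++ l₂) s := by
  induction l₁ generalizing p with
  | nil => cases h₁; exact h₂
  | cons e l ih => exact ⟨h₁.1, ih h₁.2⟩

theorem WalkFromTo.mem_WLang {p q : σ} {l : List (Edge M)} (h : WalkFromTo M p l q) :
    l ∈ WLang M := by
  induction l generalizing p with
  | nil => exact List.IsChain.nil
  | cons e l ih =>
    cases l with
    | nil => exact List.IsChain.singleton _
    | cons f l => exact List.IsChain.cons_cons h.2.1.symm (ih h.2)

theorem exists_walkFromTo_cons {e : Edge M} {l : List (Edge M)} (h : e :: l ∈ WLang M) :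
    ∃ q, WalkFromTo M e.1.1 (e :: l) q := by
  induction l generalizing e with
  | nil => exact ⟨e.1.2.2, rfl, rfl⟩
  | cons f l ih =>
    have h' := List.isChain_cons_cons.1 h
    obtain ⟨q, hq⟩ := ih h'.2
    exact ⟨q, rfl, h'.1.symm, hq.2⟩

theorem WalkFromTo.ext {p q q' : σ} {l l' : List (Edge M)} (h : WalkFromTo M p l q)
    (h' : WalkFromTo M p l' q') (hw : edgeWord l = edgeWord l')
    (hs : edgeStates p l = edgeStates p l') : l = l' := by
  induction l generalizing p l' with
  | nil => cases l' with
    | nil => rfl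
    | cons e' l' => simp [edgeWord] at hw
  | cons e l ih => cases l' with
    | nil => simp [edgeWord] at hw
    | cons e' l' =>
      simp only [edgeWord, edgeStates, List.map_cons, List.cons.injEq, true_and] at hw hs
      have he : e = e' := Subtype.ext (Prod.ext (h.1.trans h'.1.symm) (Prod.ext hw.1 hs.1))
      subst he
      rw [ih h.2 h'.2 hw.2 (by simpa [edgeStates] using hs.2)]

theorem WalkFromTo.getElem_edgeStates_mem_step {p q : σ} {l : List (Edge M)}
    (h : WalkFromTo M p l q) (i : ℕ) (hi : i < l.length) :
    (edgeStates p l)[i + 1]'(by simpa) ∈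
      M.step ((edgeStates p l)[i]'(by simp; omega)) ((edgeWord l)[i]'(by simpa)) := by
  induction l generalizing p i with
  | nil => simp at hi
  | cons e l ih =>
    cases i with
    | zero =>
      have := e.2
      rw [h.1] at this
      simpa [edgeStates, edgeWord] using this
    | succ i => simpa [edgeStates, edgeWord] using ih h.2 i (by simpa using hi)

theorem WalkFromTo.getElem_edgeStates_length {p q : σ} {l : List (Edge M)}
    (h : WalkFromTo M p l q) : (edgeStates p l)[l.length]'(by simp) = q := by
  induction l generalizing p with
  | nil => exact h
  | cons e l ih => simpa [edgeStates] using ih h.2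

theorem WalkFromTo.accRun {p q : σ} {l : List (Edge M)} (h : WalkFromTo M p l q)
    (hp : p ∈ M.start) (hq : q ∈ M.accept) {w : List α} (hw : edgeWord l = w) :
    AccRun M w fun i => (edgeStates p l)[i.1]'(by simpa [← hw] using i.2) := by
  subst hw
  refine ⟨hp, ?_, fun i => ?_⟩
  · have := h.getElem_edgeStates_length
    simpa [this] using hq
  · exact h.getElem_edgeStates_mem_step i (by simpa using i.2)

theorem exists_walkFromTo (w : List α) (f : ℕ → σ)
    (hf : ∀ i (hi : i < w.length), f (i + 1) ∈ M.step (f i) w[i]) :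
    ∃ l : List (Edge M), edgeWord l = w ∧ WalkFromTo M (f 0) l (f w.length) := by
  induction w generalizing f with
  | nil => exact ⟨[], rfl, rfl⟩
  | cons a w ih =>
    obtain ⟨l, hl, hwalk⟩ := ih (fun i => f (i + 1)) fun i hi =>
      hf (i + 1) (Nat.succ_lt_succ hi)
    refine ⟨⟨(f 0, a, f 1), hf 0 (Nat.succ_pos _)⟩ :: l, ?_, rfl, hwalk⟩
    exact congrArg (a :: ·) hl

theorem AccRun.exists_nat_states {w : List α} {r : Fin (w.length + 1) → σ} (h : AccRun M w r) :
    ∃ f : ℕ → σ, (∀ i, r i = f i.1) ∧ f 0 ∈ M.start ∧ f w.length ∈ M.accept ∧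
      ∀ i (hi : i < w.length), f (i + 1) ∈ M.step (f i) w[i] := by
  have key : ∀ i : Fin (w.length + 1), r i = r (Fin.ofNat (w.length + 1) i.1) := fun i => by simp
  refine ⟨fun i => r (Fin.ofNat _ i), key, by simpa using h.1, ?_, fun i hi => ?_⟩
  · have := h.2.1
    rwa [key] at this
  · have := h.2.2 ⟨i, hi⟩
    rw [key (Fin.succ _), key (Fin.castSucc _)] at this
    exact this

theorem image_edgeWord_acceptedWalks (n : ℕ) :
    edgeWord '' {l | l ∈ AcceptedWalks M ∧ l.length = n} = {w | w ∈ NLang M ∧ w.length = n} := by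
  ext w
  constructor
  · rintro ⟨l, ⟨⟨p, hp, q, hq, h⟩, rfl⟩, rfl⟩
    exact ⟨⟨_, h.accRun hp hq rfl⟩, length_edgeWord l⟩
  · rintro ⟨⟨r, hr⟩, rfl⟩
    obtain ⟨f, -, h0, h1, hf⟩ := hr.exists_nat_states
    obtain ⟨l, rfl, h⟩ := exists_walkFromTo w f hf
    exact ⟨l, ⟨⟨_, h0, _, h1, h⟩, (length_edgeWord l).symm⟩, rfl⟩

theorem Essential.exists_walks (hess : Essential M) (s : σ) :
    (∃ p ∈ M.start, ∃ l, WalkFromTo M p l s) ∧ ∃ q ∈ M.accept, ∃ l, WalkFromTo M s l q := by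
  obtain ⟨w, r, hr, i, rfl⟩ := hess s
  obtain ⟨f, hrf, h0, h1, hf⟩ := hr.exists_nat_states
  have hi : i.1 ≤ w.length := Nat.lt_succ_iff.1 i.2
  constructor
  · obtain ⟨l, -, hl⟩ := exists_walkFromTo (M := M) (w.take i) f fun j hj => by
      simpa using hf j (by simp at hj; omega)
    rw [List.length_take, min_eq_left hi] at hl
    exact ⟨_, h0, l, hrf i ▸ hl⟩
  · obtain ⟨l, -, hl⟩ := exists_walkFromTo (M := M) (w.drop i) (fun j => f (i + j)) fun j hj => by
      simpa [add_assoc] using hf (i + j) (by simp at hj; omega)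
    rw [List.length_drop, Nat.add_sub_cancel' hi] at hl
    exact ⟨_, h1, l, hrf i ▸ hl⟩

instance [Finite α] [Finite σ] : Finite (Edge M) :=
  inferInstanceAs (Finite {e : σ × α × σ // e.2.2 ∈ M.step e.1 e.2.1})

theorem ncard_edgeWord_fiber_le [Finite σ] (w : List α) :
    {l | l ∈ AcceptedWalks M ∧ edgeWord l = w}.ncard ≤
      Nat.card {r : Fin (w.length + 1) → σ // AccRun M w r} := by
  choose p hp q hq h using fun l : {l | l ∈ AcceptedWalks M ∧ edgeWord l = w} => l.2.1
  refine Nat.card_le_card_of_injective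
    (fun l => (⟨_, (h l).accRun (hp l) (hq l) l.2.2⟩ : {r // AccRun M w r})) ?_
  intro l l' hll
  have hw : edgeWord l.1 = edgeWord l'.1 := l.2.2.trans l'.2.2.symm
  have hlen : l.1.length = w.length := by
    simpa using congrArg List.length l.2.2
  have hlen' : l'.1.length = w.length := by
    simpa using congrArg List.length l'.2.2
  have hr := fun i => congrFun (congrArg Subtype.val hll) i
  have hp : p l = p l' := hr 0
  have hs : edgeStates (p l) l.1 = edgeStates (p l') l'.1 := by
    refine List.ext_getElem (by simp [hlen, hlen']) fun i hi _ => ?_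
    exact hr ⟨i, by simpa [hlen] using hi⟩
  have h' := h l'
  rw [← hp] at h' hs
  exact Subtype.ext ((h l).ext h' hw hs)

end Walks

theorem List.finite_mem_and_length_eq {β : Type*} [Finite β] (L : Set (List β)) (n : ℕ) :
    {l | l ∈ L ∧ l.length = n}.Finite :=
  (List.finite_length_eq β n).subset fun _ h => h.2

theorem List.ncard_mem_and_length_le {β : Type*} [Finite β] (L : Set (List β)) (n : ℕ) :
    {l | l ∈ L ∧ l.length = n}.ncard ≤ Nat.card β ^ n := by
  have := Fintype.ofFinite β
  calc {l | l ∈ L ∧ l.length = n}.ncard ≤ {l : List β | l.length = n}.ncard :=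
        Set.ncard_le_ncard (fun _ h => h.2) (List.finite_length_eq β n)
    _ = Nat.card (List.Vector β n) := rfl
    _ = Nat.card β ^ n := by rw [Nat.card_eq_fintype_card, card_vector, Nat.card_eq_fintype_card]

section Counting

variable {α σ : Type*} [Finite α] [Finite σ] {M : NFA α σ}

theorem ncard_NLang_le_ncard_WLang (n : ℕ) :
    {w | w ∈ NLang M ∧ w.length = n}.ncard ≤ {l | l ∈ WLang M ∧ l.length = n}.ncard := by
  rw [← image_edgeWord_acceptedWalks]
  refine (Set.ncard_image_le (List.finite_mem_and_length_eq _ n)).trans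
    (Set.ncard_le_ncard ?_ (List.finite_mem_and_length_eq _ n))
  rintro l ⟨⟨p, -, q, -, h⟩, hl⟩
  exact ⟨h.mem_WLang, hl⟩

theorem ncard_acceptedWalks_le {K : ℕ}
    (hK : ∀ w : List α, Nat.card {r : Fin (w.length + 1) → σ // AccRun M w r} ≤ K) (n : ℕ) :
    {l | l ∈ AcceptedWalks M ∧ l.length = n}.ncard ≤
      K * {w | w ∈ NLang M ∧ w.length = n}.ncard := by
  classical
  have hfin := List.finite_mem_and_length_eq (AcceptedWalks M) n
  rw [← image_edgeWord_acceptedWalks, Set.ncard_eq_toFinset_card _ hfin,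
    Set.ncard_eq_toFinset_card _ (hfin.image _), Set.Finite.toFinset_image _ hfin]
  refine Finset.card_le_mul_card_image _ _ fun w hw => ?_
  refine le_trans ?_ ((ncard_edgeWord_fiber_le (M := M) w).trans (hK w))
  rw [← Set.ncard_coe_finset]
  refine Set.ncard_le_ncard ?_
    ((List.finite_mem_and_length_eq (AcceptedWalks M) w.length).subset ?_)
  · intro l hl
    simp only [Finset.coe_filter, Set.Finite.mem_toFinset, Set.mem_ofPred_eq] at hl
    exact ⟨hl.1.1, hl.2⟩
  · rintro l ⟨hl, rfl⟩
    exact ⟨hl, (length_edgeWord l).symm⟩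

theorem Essential.exists_ncard_WLang_le [Fintype σ] (hess : Essential M) :
    ∃ c : σ × σ → ℕ, ∀ n, n ≠ 0 → {l | l ∈ WLang M ∧ l.length = n}.ncard ≤
      ∑ i, {l | l ∈ AcceptedWalks M ∧ l.length = n + c i}.ncard := by
  choose hpre hsuf using hess.exists_walks
  choose s hs u hu using hpre
  choose t ht v hv using hsuf
  refine ⟨fun i => (u i.1).length + (v i.2).length, fun n hn => ?_⟩
  let S : σ × σ → Set (List (Edge M)) := fun i =>
    {l | l.length = n ∧ u i.1 ++ (l ++ v i.2) ∈ AcceptedWalks M}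
  have hS : ∀ i, (S i).Finite := fun i => (List.finite_length_eq _ n).subset fun _ h => h.1
  have hsub : {l | l ∈ WLang M ∧ l.length = n} ⊆ ⋃ i, S i := by
    rintro l ⟨hl, hlen⟩
    cases l with
    | nil => exact absurd hlen.symm hn
    | cons e l =>
      obtain ⟨q, hq⟩ := exists_walkFromTo_cons hl
      exact Set.mem_iUnion.2 ⟨(e.1.1, q), hlen, _, hs _, _, ht q, (hu _).append (hq.append (hv q))⟩
  calc _ ≤ (⋃ i, S i).ncard := Set.ncard_le_ncard hsub (Set.finite_iUnion hS)
    _ ≤ ∑ i, (S i).ncard := Set.ncard_iUnion_le_of_fintype S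
    _ ≤ _ := Finset.sum_le_sum fun i _ => ?_
  refine Set.ncard_le_ncard_of_injOn (fun l => u i.1 ++ (l ++ v i.2)) ?_ ?_
    (List.finite_mem_and_length_eq _ _)
  · rintro l ⟨hlen, hl⟩
    exact ⟨hl, by simp only [List.length_append, hlen]; omega⟩
  · intro l _ l' _ h
    exact List.append_cancel_right (List.append_cancel_left h)

end Counting

/-- Two sequences of exponential growth have the same growth rate if the second dominates the first
and is itself dominated by a finite sum of constant multiples of shifts of the first. -/
theorem limsup_log_div_eq_of_le_sum_shift {ι : Type*} [Fintype ι] {a b : ℕ → ℕ} {A K : ℕ}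
    (c : ι → ℕ) (hA : ∀ n, a n ≤ A ^ n) (hba : ∀ n, b n ≤ a n)
    (hab : ∀ n, n ≠ 0 → a n ≤ ∑ i, K * b (n + c i)) :
    limsup (fun n : ℕ => Real.log (b n) / n) atTop =
      limsup (fun n : ℕ => Real.log (a n) / n) atTop := by
  have hnonneg : ∀ (x : ℕ → ℕ) (n : ℕ), 0 ≤ Real.log (x n) / n := fun x n =>
    div_nonneg (Real.log_natCast_nonneg _) n.cast_nonneg
  have hle : ∀ n : ℕ, Real.log (b n) / n ≤ Real.log (a n) / n := fun n => by
    rcases Nat.eq_zero_or_pos (b n) with h | h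
    · simpa [h] using hnonneg a n
    · have := hba n
      gcongr
  have hbdd : ∀ n : ℕ, Real.log (a n) / n ≤ Real.log A := fun n => by
    refine div_le_of_le_mul₀ n.cast_nonneg (Real.log_natCast_nonneg _) ?_
    rcases Nat.eq_zero_or_pos (a n) with h | h
    · simpa [h] using mul_nonneg (Real.log_natCast_nonneg A) n.cast_nonneg
    · rw [mul_comm, ← Real.log_pow]
      exact Real.log_le_log (by exact_mod_cast h) (by exact_mod_cast hA n)
  have hUa : IsBoundedUnder (· ≤ ·) atTop fun n : ℕ => Real.log (a n) / n :=
    isBoundedUnder_of ⟨_, hbdd⟩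
  have hUb : IsBoundedUnder (· ≤ ·) atTop fun n : ℕ => Real.log (b n) / n :=
    isBoundedUnder_of ⟨_, fun n => (hle n).trans (hbdd n)⟩
  have hC : ∀ x : ℕ → ℕ, IsCoboundedUnder (· ≤ ·) atTop fun n : ℕ => Real.log (x n) / n := fun x =>
    (isBoundedUnder_of ⟨0, hnonneg x⟩ : IsBoundedUnder (· ≥ ·) atTop _).isCoboundedUnder_le
  refine le_antisymm (limsup_le_limsup (Eventually.of_forall hle) (hC b) hUa) ?_
  set h := limsup (fun n : ℕ => Real.log (b n) / n) atTop with hh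
  have hh0 : 0 ≤ h :=
    le_limsup_of_frequently_le (Eventually.of_forall (hnonneg b)).frequently hUb
  refine le_of_forall_pos_le_add fun ε hε => ?_
  obtain ⟨N, hN⟩ := eventually_atTop.1
    (eventually_lt_of_limsup_lt (show h < h + ε by linarith) hUb)
  have hexp : ∀ n, N ≤ n → n ≠ 0 → (b n : ℝ) ≤ Real.exp ((h + ε) * n) := fun n hn hn0 => by
    rcases Nat.eq_zero_or_pos (b n) with h0 | h0
    · simpa [h0] using (Real.exp_pos _).le
    · have := (div_lt_iff₀ (by positivity : (0 : ℝ) < n)).1 (hN n hn)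
      exact (Real.log_le_iff_le_exp (by exact_mod_cast h0)).1 this.le
  let D : ℝ := ∑ i, K * Real.exp ((h + ε) * c i) + 1
  have hD : 1 ≤ D := le_add_of_nonneg_left (Finset.sum_nonneg fun i _ => by positivity)
  have hbound : ∀ n, N ≤ n → n ≠ 0 → Real.log (a n) / n ≤ Real.log D / n + (h + ε) :=
    fun n hn hn0 => by
    have hn' : (0 : ℝ) < n := by positivity
    rw [div_le_iff₀ hn', add_mul, div_mul_cancel₀ _ hn'.ne']
    rcases Nat.eq_zero_or_pos (a n) with h0 | h0
    · have := Real.log_nonneg hD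
      rw [h0, Nat.cast_zero, Real.log_zero]
      positivity
    · rw [Real.log_le_iff_le_exp (by exact_mod_cast h0), Real.exp_add,
        Real.exp_log (by linarith)]
      calc (a n : ℝ) ≤ ∑ i, (K : ℝ) * b (n + c i) := by exact_mod_cast hab n hn0
        _ ≤ ∑ i, K * Real.exp ((h + ε) * c i) * Real.exp ((h + ε) * n) :=
          Finset.sum_le_sum fun i _ => by
            rw [mul_assoc, ← Real.exp_add]
            refine mul_le_mul_of_nonneg_left ?_ K.cast_nonneg
            refine (hexp (n + c i) (by omega) (by omega)).trans_eq ?_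
            push_cast
            ring_nf
        _ ≤ D * Real.exp ((h + ε) * n) := by
          rw [← Finset.sum_mul]
          exact mul_le_mul_of_nonneg_right (by simp [D]) (Real.exp_pos _).le
  have hlim : Tendsto (fun n : ℕ => Real.log D / n + (h + ε)) atTop (𝓝 (h + ε)) := by
    simpa using (tendsto_const_div_atTop_nhds_zero_nat (Real.log D)).add_const (h + ε)
  rw [← hlim.limsup_eq]
  refine limsup_le_limsup ?_ (hC a) hlim.isBoundedUnder_le
  filter_upwards [eventually_ge_atTop N, eventually_ne_atTop 0] with n hn hn0 using hbound n hn hn0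

/-- If a finite NFA `M` is essential and has bounded ambiguity, then the entropy of
its language equals the entropy of the walk language of its transition graph. -/
theorem entropy_eq_entropy_walks {α σ : Type*} [Fintype α] [Fintype σ] (M : NFA α σ)
    (hess : Essential M) (hamb : BoundedAmbiguity M) :
    entropy (NLang M) = entropy (WLang M) := by
  obtain ⟨K, hK⟩ := hamb
  obtain ⟨c, hc⟩ := hess.exists_ncard_WLang_le
  exact limsup_log_div_eq_of_le_sum_shift c (List.ncard_mem_and_length_le (WLang M))
    ncard_NLang_le_ncard_WLang fun n hn => (hc n hn).trans
      (Finset.sum_le_sum fun i _ => ncard_acceptedWalks_le hK _)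
end

section
/- Let M be a nondeterministic finite automaton over a finite alphabet with finite state set, and suppose M is essential and has bounded ambiguity. Then there exist constants C ∈ ℕ and D > 0 such that for every n ≥ 1: |B_n(L(M))| ≤ |B_n(W(M))| ≤ (C+1) · D · max_{0 ≤ i ≤ C} |B_{n+i}(L(M))|, where B_n denotes the set of words of length n in the given language. -/
/-- `IsPath p l q`: the edges of `l` form a path from the state `p` to the state `q`. -/
def IsPath {α σ : Type*} {M : NFA α σ} : σ → List (Edge M) → σ → Prop
  | p, [], q => p = q
  | p, e :: l, q => e.1.1 = p ∧ IsPath e.1.2.2 l q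

/-- The label of an edge. -/
def Edge.label {α σ : Type*} {M : NFA α σ} (e : Edge M) : α := e.1.2.1

/-- The target state of an edge. -/
def Edge.target {α σ : Type*} {M : NFA α σ} (e : Edge M) : σ := e.1.2.2

instance Edge.instFinite {α σ : Type*} [Finite α] [Finite σ] (M : NFA α σ) : Finite (Edge M) :=
  inferInstanceAs (Finite {e : σ × α × σ // e.2.2 ∈ M.step e.1 e.2.1})

namespace IsPath

variable {α σ : Type*} {M : NFA α σ}

lemma append {p q s : σ} {l m : List (Edge M)} (hl : IsPath p l q) (hm : IsPath q m s) :
    IsPath p (l ++ m) s := by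
  induction l generalizing p with
  | nil => obtain rfl : p = q := hl; exact hm
  | cons e l ih => exact ⟨hl.1, ih hl.2⟩

lemma mem_WLang {p q : σ} {l : List (Edge M)} (hl : IsPath p l q) : l ∈ WLang M := by
  change l.IsChain _
  induction l generalizing p with
  | nil => exact List.isChain_nil
  | cons e l ih =>
    cases l with
    | nil => exact List.isChain_singleton _
    | cons f l => exact List.isChain_cons_cons.2 ⟨hl.2.1.symm, ih hl.2⟩

lemma exists_of_mem_WLang {e : Edge M} {l : List (Edge M)} (h : e :: l ∈ WLang M) :
    ∃ q, IsPath e.1.1 (e :: l) q := by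
  change (e :: l).IsChain _ at h
  induction l generalizing e with
  | nil => exact ⟨_, rfl, rfl⟩
  | cons f l ih =>
    obtain ⟨hef, h⟩ := List.isChain_cons_cons.1 h
    obtain ⟨q, hq⟩ := ih h
    exact ⟨q, rfl, hef.symm ▸ hq⟩

/-- A path is determined by its source, its labels and its targets. -/
lemma eq_of_map_eq {p q q' : σ} {l m : List (Edge M)} (hl : IsPath p l q) (hm : IsPath p m q')
    (hlabel : l.map Edge.label = m.map Edge.label)
    (htarget : l.map Edge.target = m.map Edge.target) : l = m := by
  induction l generalizing p m with
  | nil => cases m <;> simp_all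
  | cons e l ih =>
    cases m with
    | nil => simp at hlabel
    | cons f m =>
      simp only [List.map_cons, List.cons.injEq] at hlabel htarget
      have hef : e = f := Subtype.ext
        (Prod.ext (hl.1.trans hm.1.symm) (Prod.ext hlabel.1 htarget.1))
      subst hef
      rw [ih hl.2 hm.2 hlabel.2 htarget.2]

/-- The sequence of states visited by an accepting path is an accepting run. -/
lemma accRun {p q : σ} {l : List (Edge M)} (hl : IsPath p l q) (hp : p ∈ M.start)
    (hq : q ∈ M.accept) (d : σ) :
    AccRun M (l.map Edge.label) fun i => (p :: l.map Edge.target).getD i d := by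
  refine ⟨hp, ?_, ?_⟩
  · convert hq
    clear hp hq
    induction l generalizing p with
    | nil => exact hl
    | cons e l ih => exact ih hl.2
  · clear hp hq
    induction l generalizing p with
    | nil => exact fun i => i.elim0
    | cons e l ih =>
      intro i
      induction i using Fin.cases with
      | zero =>
        obtain rfl := hl.1
        exact e.2
      | succ j => exact ih hl.2 j

end IsPath

section

variable {α σ : Type*} {M : NFA α σ}

/-- A run of a word, split at any of its positions, is traced by two consecutive paths. -/
lemma exists_isPath_of_run (w : List α) (r : Fin (w.length + 1) → σ)
    (hr : ∀ i : Fin w.length, r i.succ ∈ M.step (r i.castSucc) (w.get i))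
    (i : Fin (w.length + 1)) :
    ∃ l m : List (Edge M), IsPath (r 0) l (r i) ∧ IsPath (r i) m (r (Fin.last w.length)) ∧
      (l ++ m).map Edge.label = w := by
  induction w with
  | nil =>
    obtain rfl : i = 0 := Subsingleton.elim (α := Fin 1) _ _
    exact ⟨[], [], rfl, rfl, rfl⟩
  | cons x w ih =>
    let e : Edge M := ⟨(r 0, x, r 1), hr 0⟩
    have ih' := ih (fun j => r j.succ) fun j => hr j.succ
    induction i using Fin.cases with
    | zero =>
      obtain ⟨l, m, hl, hm, hw⟩ := ih' 0
      exact ⟨[], e :: (l ++ m), rfl, ⟨rfl, hl.append hm⟩, congrArg (x :: ·) hw⟩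
    | succ j =>
      obtain ⟨l, m, hl, hm, hw⟩ := ih' j
      exact ⟨e :: l, m, ⟨rfl, hl⟩, hm, congrArg (x :: ·) hw⟩

lemma exists_walk_of_mem_NLang {w : List α} (hw : w ∈ NLang M) :
    ∃ l ∈ WLang M, l.map Edge.label = w := by
  obtain ⟨r, -, -, hr⟩ := hw
  obtain ⟨l, m, hl, hm, hlm⟩ := exists_isPath_of_run w r hr 0
  exact ⟨l ++ m, (hl.append hm).mem_WLang, hlm⟩

lemma finite_list_length_eq {β : Type*} [Finite β] (P : List β → Prop) (n : ℕ) :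
    Finite {l : List β // P l ∧ l.length = n} :=
  ((List.finite_length_eq β n).subset fun _ h => h.2).to_subtype

lemma card_words_le_card_walks [Finite α] [Finite σ] (M : NFA α σ) (n : ℕ) :
    Nat.card {w : List α // w ∈ NLang M ∧ w.length = n} ≤
      Nat.card {l : List (Edge M) // l ∈ WLang M ∧ l.length = n} := by
  have := finite_list_length_eq (· ∈ WLang M) n
  choose f hf hfw using fun w : {w : List α // w ∈ NLang M ∧ w.length = n} =>
    exists_walk_of_mem_NLang w.2.1
  refine Nat.card_le_card_of_injective
    (fun w => ⟨f w, hf w, by simpa [w.2.2] using congrArg List.length (hfw w)⟩) ?_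
  intro w w' h
  apply Subtype.ext
  rw [← hfw w, ← hfw w', show f w = f w' from congrArg Subtype.val h]

/-- Paths between two given states, extended to accepting paths in a fixed way, inject into
pairs of a word and an accepting run of it. -/
lemma card_paths_le [Finite α] [Finite σ] {K : ℕ}
    (hK : ∀ w : List α, Nat.card {r : Fin (w.length + 1) → σ // AccRun M w r} ≤ K)
    {s p q t : σ} {u v : List (Edge M)} (hs : s ∈ M.start) (ht : t ∈ M.accept)
    (hu : IsPath s u p) (hv : IsPath q v t) (n : ℕ) :
    Nat.card {l : List (Edge M) // IsPath p l q ∧ l.length = n} ≤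
      K * Nat.card {w : List α // w ∈ NLang M ∧ w.length = n + (u.length + v.length)} := by
  set B := {w : List α // w ∈ NLang M ∧ w.length = n + (u.length + v.length)}
  have : Finite B := finite_list_length_eq (· ∈ NLang M) _
  have := Fintype.ofFinite B
  have hpath (l : {l : List (Edge M) // IsPath p l q ∧ l.length = n}) :
      IsPath s (u ++ l.1 ++ v) t := (hu.append l.2.1).append hv
  let f (l : {l : List (Edge M) // IsPath p l q ∧ l.length = n}) :
      Σ w : B, {r : Fin (w.1.length + 1) → σ // AccRun M w.1 r} :=
    ⟨⟨(u ++ l.1 ++ v).map Edge.label, ⟨_, (hpath l).accRun hs ht s⟩, by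
      simp only [List.length_map, List.length_append, l.2.2]; omega⟩,
      ⟨_, (hpath l).accRun hs ht s⟩⟩
  have hf : Function.Injective f := by
    intro l m h
    have hlabel : (u ++ l.1 ++ v).map Edge.label = (u ++ m.1 ++ v).map Edge.label :=
      congrArg (fun x => x.1.1) h
    have hstate (i : ℕ) (hi : i < n + (u.length + v.length) + 1) :
        (s :: (u ++ l.1 ++ v).map Edge.target).getD i s =
          (s :: (u ++ m.1 ++ v).map Edge.target).getD i s :=
      congrArg (fun x => x.2.1 ⟨i, by rw [x.1.2.2]; exact hi⟩) h
    have htarget : (u ++ l.1 ++ v).map Edge.target = (u ++ m.1 ++ v).map Edge.target := by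
      refine List.ext_getElem (by simp [l.2.2, m.2.2]) fun i hi hi' => ?_
      have := hstate (i + 1) (by
        simp only [List.length_map, List.length_append, l.2.2] at hi; omega)
      rwa [List.getD_cons_succ, List.getD_cons_succ, List.getD_eq_getElem _ _ hi,
        List.getD_eq_getElem _ _ hi'] at this
    have := (hpath l).eq_of_map_eq (hpath m) hlabel htarget
    exact Subtype.ext (List.append_cancel_left (List.append_cancel_right this))
  calc _ ≤ Nat.card (Σ w : B, {r : Fin (w.1.length + 1) → σ // AccRun M w.1 r}) :=
        Nat.card_le_card_of_injective f hf
    _ = ∑ w : B, Nat.card {r : Fin (w.1.length + 1) → σ // AccRun M w.1 r} := Nat.card_sigma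
    _ ≤ ∑ _w : B, K := Finset.sum_le_sum fun w _ => hK w.1
    _ = K * Nat.card B := by simp [mul_comm]

/-- A nonempty walk is a path between two states. -/
lemma card_walks_le_sum [Finite α] [Fintype σ] (M : NFA α σ) {n : ℕ} (hn : 1 ≤ n) :
    Nat.card {l : List (Edge M) // l ∈ WLang M ∧ l.length = n} ≤
      ∑ pq : σ × σ, Nat.card {l : List (Edge M) // IsPath pq.1 l pq.2 ∧ l.length = n} := by
  have (pq : σ × σ) : Finite {l : List (Edge M) // IsPath pq.1 l pq.2 ∧ l.length = n} :=
    finite_list_length_eq _ n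
  rw [← Nat.card_sigma]
  have hex (l : {l : List (Edge M) // l ∈ WLang M ∧ l.length = n}) :
      ∃ pq : σ × σ, IsPath pq.1 l.1 pq.2 := by
    obtain ⟨_ | ⟨e, l⟩, hl, rfl⟩ := l
    · simp at hn
    · obtain ⟨q, hq⟩ := IsPath.exists_of_mem_WLang hl
      exact ⟨(_, q), hq⟩
  choose f hf using hex
  refine Nat.card_le_card_of_injective (fun l => ⟨f l, l.1, hf l, l.2.2⟩) fun l m h => ?_
  exact Subtype.ext (congrArg (fun x => x.2.1) h)

end

/-- If a finite NFA `M` is essential and has bounded ambiguity, then there are constants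
`C ∈ ℕ` and `D > 0` such that for every `n ≥ 1`:
`|B_n(L(M))| ≤ |B_n(W(M))| ≤ (C+1)·D·max_{0 ≤ i ≤ C} |B_{n+i}(L(M))|`. -/
theorem counting_walks_vs_words {α σ : Type*} [Fintype α] [Fintype σ] (M : NFA α σ)
    (hess : Essential M) (hamb : BoundedAmbiguity M) :
    ∃ (C D : ℕ), 0 < D ∧ ∀ n : ℕ, 1 ≤ n →
      Nat.card {w : List α // w ∈ NLang M ∧ w.length = n} ≤
          Nat.card {l : List (Edge M) // l ∈ WLang M ∧ l.length = n} ∧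
        Nat.card {l : List (Edge M) // l ∈ WLang M ∧ l.length = n} ≤
          (C + 1) * D *
            (Finset.range (C + 1)).sup
              (fun i => Nat.card {w : List α // w ∈ NLang M ∧ w.length = n + i}) := by
  obtain ⟨K, hK⟩ := hamb
  have hends (q : σ) : ∃ (s t : σ) (u v : List (Edge M)), s ∈ M.start ∧ t ∈ M.accept ∧
      IsPath s u q ∧ IsPath q v t := by
    obtain ⟨w, r, ⟨hs, ht, hr⟩, i, rfl⟩ := hess q
    obtain ⟨u, v, hu, hv, -⟩ := exists_isPath_of_run w r hr i
    exact ⟨_, _, u, v, hs, ht, hu, hv⟩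
  choose s t u v hs ht hu hv using hends
  set c : σ × σ → ℕ := fun pq => (u pq.1).length + (v pq.2).length
  set C := Finset.univ.sup c
  refine ⟨C, Fintype.card (σ × σ) * K + 1, by omega, fun n hn =>
    ⟨card_words_le_card_walks M n, ?_⟩⟩
  set b : ℕ → ℕ := fun i => Nat.card {w : List α // w ∈ NLang M ∧ w.length = n + i}
  set S := (Finset.range (C + 1)).sup b
  have hS (pq : σ × σ) : b (c pq) ≤ S :=
    Finset.le_sup (Finset.mem_range.2 (Nat.lt_succ_of_le (Finset.le_sup (Finset.mem_univ pq))))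
  calc _ ≤ ∑ pq : σ × σ, Nat.card {l : List (Edge M) // IsPath pq.1 l pq.2 ∧ l.length = n} :=
        card_walks_le_sum M hn
    _ ≤ ∑ pq : σ × σ, K * S := Finset.sum_le_sum fun pq _ =>
        (card_paths_le hK (hs pq.1) (ht pq.2) (hu pq.1) (hv pq.2) n).trans
          (Nat.mul_le_mul_left K (hS pq))
    _ = Fintype.card (σ × σ) * K * S := by simp [mul_assoc]
    _ ≤ (C + 1) * (Fintype.card (σ × σ) * K + 1) * S := by
        refine Nat.mul_le_mul_right S ?_
        exact (Nat.le_succ _).trans (Nat.le_mul_of_pos_left _ C.succ_pos)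
end

section
/- Let m ≥ 1 and let H and K be finitely generated subgroups of the free group F_m. Then the intersection H ∩ K is finitely generated (Howson's theorem). -/
/-- A prefix of `l₁ ++ l₂` is a prefix of `l₁`, or `l₁` followed by a prefix of `l₂`. -/
theorem List.IsPrefix.prefix_or_eq_append {α : Type*} {p l₁ l₂ : List α} (h : p <+: l₁ ++ l₂) :
    p <+: l₁ ∨ ∃ r, p = l₁ ++ r ∧ r <+: l₂ := by
  rcases List.prefix_or_prefix_of_prefix h (List.prefix_append l₁ l₂) with hp | ⟨r, rfl⟩
  · exact Or.inl hp
  · exact Or.inr ⟨r, rfl, (List.prefix_append_right_inj l₁).1 h⟩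

namespace FreeGroup

variable {α : Type*}

/-- Every prefix of a reduct of a word `L₁` represents the same element as some prefix of `L₁`. -/
theorem Red.exists_prefix_mk_eq {L₁ L₂ p : List (α × Bool)} (h : Red L₁ L₂) (hp : p <+: L₂) :
    ∃ q, q <+: L₁ ∧ mk q = mk p := by
  induction h using Relation.ReflTransGen.head_induction_on with
  | refl => exact ⟨p, hp, rfl⟩
  | head hstep _ ih =>
    obtain ⟨q, hq, hqp⟩ := ih
    rw [← hqp]
    obtain @⟨A, B, x, b⟩ := hstep
    rcases hq.prefix_or_eq_append with hq | ⟨r, rfl, hr⟩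
    · exact ⟨q, hq.trans (List.prefix_append _ _), rfl⟩
    · refine ⟨A ++ (x, b) :: (x, !b) :: r, ?_, Quot.sound Red.Step.not⟩
      rw [List.prefix_append_right_inj]
      simpa using hr

/-- `QuasiconvexWith H T`: reading the reduced word of an element of `H` never leaves the union of
the cosets `H * t⁻¹` with `t ∈ T`. -/
def QuasiconvexWith [DecidableEq α] (H : Subgroup (FreeGroup α)) (T : Set (FreeGroup α)) : Prop :=
  ∀ h ∈ H, ∀ p, p <+: h.toWord → ∃ t ∈ T, mk p * t ∈ H

variable [DecidableEq α] {H K : Subgroup (FreeGroup α)} {T T' : Set (FreeGroup α)}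

/-- Finitely generated subgroups of free groups are quasiconvex. -/
theorem exists_finite_quasiconvexWith_of_fg (hH : H.FG) :
    ∃ T : Set (FreeGroup α), T.Finite ∧ QuasiconvexWith H T := by
  obtain ⟨S, rfl⟩ := hH
  set T : Set (FreeGroup α) :=
    insert 1 (⋃ s ∈ S, (fun p => (mk p)⁻¹ * s) '' {p | p ∈ s.toWord.inits})
  have hfin : T.Finite :=
    (S.finite_toSet.biUnion fun s _ => (List.finite_toSet _).image _).insert 1
  set H := Subgroup.closure (S : Set (FreeGroup α))
  have key : ∀ h ∈ H, ∃ w, mk w = h ∧ ∀ p, p <+: w → ∃ t ∈ T, mk p * t ∈ H := by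
    intro h hh
    induction hh using Subgroup.closure_induction with
    | mem s hs =>
      refine ⟨s.toWord, mk_toWord, fun p hp => ⟨(mk p)⁻¹ * s, Or.inr ?_, ?_⟩⟩
      · exact Set.mem_biUnion hs ⟨p, by simpa using hp, rfl⟩
      · rw [mul_inv_cancel_left]
        exact Subgroup.subset_closure hs
    | one =>
      refine ⟨[], rfl, fun p hp => ⟨1, Or.inl rfl, ?_⟩⟩
      rw [List.prefix_nil.1 hp, ← one_eq_mk, one_mul]
      exact H.one_mem
    | mul x y hx _ ihx ihy =>
      obtain ⟨u, rfl, hu⟩ := ihx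
      obtain ⟨v, rfl, hv⟩ := ihy
      refine ⟨u ++ v, mul_mk.symm, fun p hp => ?_⟩
      rcases hp.prefix_or_eq_append with hp | ⟨r, rfl, hr⟩
      · exact hu p hp
      · obtain ⟨t, ht, hrt⟩ := hv r hr
        refine ⟨t, ht, ?_⟩
        rw [← mul_mk, mul_assoc]
        exact H.mul_mem hx hrt
    | inv x hx ih =>
      obtain ⟨w, rfl, hw⟩ := ih
      refine ⟨invRev w, inv_mk.symm, fun p ⟨r, hr⟩ => ?_⟩
      have hwe : w = invRev r ++ invRev p := by
        rw [← invRev_append, hr, invRev_invRev]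
      obtain ⟨t, ht, hrt⟩ := hw (invRev r) ⟨_, hwe.symm⟩
      refine ⟨t, ht, ?_⟩
      have := H.mul_mem (H.inv_mem hx) hrt
      rwa [hwe, ← mul_mk, ← inv_mk, ← inv_mk, mul_inv_rev, inv_inv, inv_inv, mul_assoc,
        mul_inv_cancel_left] at this
  refine ⟨T, hfin, fun h hh p hp => ?_⟩
  obtain ⟨w, rfl, hw⟩ := key h hh
  rw [toWord_mk] at hp
  obtain ⟨q, hq, hqp⟩ := reduce.red.exists_prefix_mk_eq hp
  simpa only [hqp] using hw q hq

/-- The intersection of two quasiconvex subgroups is quasiconvex. -/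
theorem QuasiconvexWith.exists_finite_inf (hT : T.Finite) (hT' : T'.Finite)
    (hH : QuasiconvexWith H T) (hK : QuasiconvexWith K T') :
    ∃ U : Set (FreeGroup α), U.Finite ∧ QuasiconvexWith (H ⊓ K) U := by
  have hc : ∀ z : FreeGroup α × FreeGroup α, ∃ u, ∀ g, g * z.1 ∈ H → g * z.2 ∈ K →
      g * u ∈ H ⊓ K := by
    rintro ⟨t, t'⟩
    by_cases h : ∃ r, r * t ∈ H ∧ r * t' ∈ K
    · obtain ⟨r, hr, hr'⟩ := h
      refine ⟨r⁻¹, fun g hg hg' => ⟨?_, ?_⟩⟩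
      · simpa [mul_assoc] using H.mul_mem hg (H.inv_mem hr)
      · simpa [mul_assoc] using K.mul_mem hg' (K.inv_mem hr')
    · exact ⟨1, fun g hg hg' => (h ⟨g, hg, hg'⟩).elim⟩
  choose c hc using hc
  refine ⟨c '' T ×ˢ T', (hT.prod hT').image c, fun h hh p hp => ?_⟩
  obtain ⟨t, ht, hpt⟩ := hH h hh.1 p hp
  obtain ⟨t', ht', hpt'⟩ := hK h hh.2 p hp
  exact ⟨c (t, t'), ⟨_, ⟨ht, ht'⟩, rfl⟩, hc (t, t') _ hpt hpt'⟩

/-- Quasiconvex subgroups of free groups of finite rank are finitely generated. -/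
theorem QuasiconvexWith.fg [Finite α] (hT : T.Finite) (hH : QuasiconvexWith H T) : H.FG := by
  set X : Set (FreeGroup α) := insert 1 T
  have hX : X.Finite := hT.insert 1
  set E : Set (FreeGroup α) := insert 1 (Set.range fun x : α × Bool => mk [x])
  have hE : E.Finite := (Set.finite_range _).insert 1
  set Y : Set (FreeGroup α) := (fun z => z.1⁻¹ * z.2.1 * z.2.2) '' X ×ˢ E ×ˢ X ∩ H
  have hY : Y.Finite := ((hX.prod (hE.prod hX)).image _).inter_of_left _
  refine (Subgroup.fg_iff H).2 ⟨Y, le_antisymm ?_ fun h hh => ?_, hY⟩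
  · exact (Subgroup.closure_le H).2 Set.inter_subset_right
  have key : ∀ p, p <+: h.toWord → ∀ r ∈ X, mk p * r ∈ H → mk p * r ∈ Subgroup.closure Y := by
    intro p
    induction p using List.reverseRecOn with
    | nil =>
      intro _ r hr hrH
      refine Subgroup.subset_closure ⟨⟨(1, 1, r), ⟨Or.inl rfl, Or.inl rfl, hr⟩, ?_⟩, hrH⟩
      simp [← one_eq_mk]
    | append_singleton p x ih =>
      intro hp r hr hrH
      have hp' : p <+: h.toWord := (List.prefix_append _ _).trans hp
      obtain ⟨t, ht, hpt⟩ := hH h hh p hp'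
      have heq : mk (p ++ [x]) * r = (mk p * t) * (t⁻¹ * mk [x] * r) := by
        rw [← mul_mk]; group
      have hmem : t⁻¹ * mk [x] * r ∈ H := by
        rwa [heq, H.mul_mem_cancel_left hpt] at hrH
      rw [heq]
      refine mul_mem (ih hp' t (Or.inr ht) hpt) (Subgroup.subset_closure ⟨?_, hmem⟩)
      exact ⟨(t, mk [x], r), ⟨Or.inr ht, Or.inr ⟨x, rfl⟩, hr⟩, rfl⟩
  simpa [mk_toWord] using key _ List.prefix_rfl 1 (Or.inl rfl) (by simpa [mk_toWord] using hh)

end FreeGroup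

/-- Howson's theorem: the intersection of two finitely generated subgroups of a free
group of finite rank `m ≥ 1` is finitely generated. -/
theorem howson (m : ℕ) (hm : 1 ≤ m) (H K : Subgroup (FreeGroup (Fin m)))
    (hH : H.FG) (hK : K.FG) : (H ⊓ K).FG := by
  obtain ⟨T, hT, hHT⟩ := FreeGroup.exists_finite_quasiconvexWith_of_fg hH
  obtain ⟨T', hT', hKT'⟩ := FreeGroup.exists_finite_quasiconvexWith_of_fg hK
  obtain ⟨U, hU, hHKU⟩ := hHT.exists_finite_inf hT hT' hKT'
  exact hHKU.fg hU
end
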